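/- Let N ≥ 1 and for m,n,p ∈ {0,…,N+1} let u_{m,n,p} : ℝ → ℝ be twice differentiable, satisfying at all interior indices m,n,p ∈ {1,…,N} the conservative lattice equation ü_{m,n,p} − c²∇²u_{m,n,p} + μu_{m,n,p} + V′(u_{m,n,p}) − J = 0 (i.e., β = γ = 0), satisfying the discrete Neumann conditions u_{N+1,n,p}(t) = u_{N,n,p}(t), u_{m,N+1,p}(t) = u_{m,N,p}(t), u_{m,n,N+1}(t) = u_{m,n,N}(t) for all m,n,p ∈ {1,…,N} and all t, and such that every boundary node with m = 0, n = 0 or p = 0 is constant in time (u̇ = 0 there). Then the total energy E(t) is constant: dE/dt = 0 for all t. -/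

import Mathlib

noncomputable section

open Finset

/-- Discrete Laplacian on the three-dimensional lattice. -/
def dLap (u : ℤ → ℤ → ℤ → ℝ → ℝ) (m n p : ℤ) (t : ℝ) : ℝ :=
  u (m + 1) n p t + u (m - 1) n p t + u m (n + 1) p t + u m (n - 1) p t
    + u m n (p + 1) t + u m n (p - 1) t - 6 * u m n p t

/-- Time derivative of the node function. -/
def ud (u : ℤ → ℤ → ℤ → ℝ → ℝ) (m n p : ℤ) (t : ℝ) : ℝ := deriv (u m n p) t

/-- Hamiltonian of the lattice node at `(m,n,p)`. -/
def nodeH (c μ J : ℝ) (V : ℝ → ℝ) (u : ℤ → ℤ → ℤ → ℝ → ℝ) (m n p : ℤ) (t : ℝ) : ℝ :=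
  (1:ℝ)/2 * ((ud u m n p t) ^ 2 + c ^ 2 * (u (m + 1) n p t - u m n p t) ^ 2
      + c ^ 2 * (u m (n + 1) p t - u m n p t) ^ 2
      + c ^ 2 * (u m n (p + 1) t - u m n p t) ^ 2
      + μ * (u m n p t) ^ 2)
    + V (u m n p t) - J * u m n p t

/-- Total energy of the lattice system. -/
def totE (N : ℕ) (c μ J : ℝ) (V : ℝ → ℝ) (u : ℤ → ℤ → ℤ → ℝ → ℝ) (t : ℝ) : ℝ :=
  (∑ m ∈ Icc (1:ℤ) (N:ℤ), ∑ n ∈ Icc (1:ℤ) (N:ℤ), ∑ p ∈ Icc (1:ℤ) (N:ℤ),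
      nodeH c μ J V u m n p t)
    + c ^ 2 / 2 *
      ((∑ n ∈ Icc (1:ℤ) (N:ℤ), ∑ p ∈ Icc (1:ℤ) (N:ℤ), (u 1 n p t - u 0 n p t) ^ 2)
        + (∑ m ∈ Icc (1:ℤ) (N:ℤ), ∑ p ∈ Icc (1:ℤ) (N:ℤ), (u m 1 p t - u m 0 p t) ^ 2)
        + (∑ m ∈ Icc (1:ℤ) (N:ℤ), ∑ n ∈ Icc (1:ℤ) (N:ℤ), (u m n 1 t - u m n 0 t) ^ 2))

/-!
The energy is a sum of on-site terms and of the elastic energies of the bonds. The latter group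
into the grid lines parallel to the axes, including the bond of each line to its node of index `0`,
so the coupling is a one-dimensional matter. Summation by parts along a line turns the rate of
change of its bond energy into the flux through its two ends minus the power that the second
difference delivers to the interior nodes. Summed over the lines, the second differences make up the
Laplacian, which the equation of motion cancels against the rate of the on-site terms. Only the
flux remains: it vanishes at a Neumann end since the last bond is unstretched, and at a fixed end
since the end node does not move.
-/

theorem deriv_eq_zero_of_forall_eq {𝕜 F : Type*} [NontriviallyNormedField 𝕜]
    [NormedAddCommGroup F] [NormedSpace 𝕜 F] {f : 𝕜 → F} (hf : ∀ x y, f x = f y) (x : 𝕜) :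
    deriv f x = 0 := by
  rw [funext fun y => hf y x, deriv_const]

theorem sum_Icc_mul_sub_eq_sub_sum_mul_second_difference {R : Type*} [CommRing R] (N : ℕ)
    (f g : ℤ → R) :
    ∑ m ∈ Icc (0 : ℤ) N, (f (m + 1) - f m) * (g (m + 1) - g m)
      = (f (N + 1) - f N) * g (N + 1) - (f 1 - f 0) * g 0
        - ∑ m ∈ Icc (1 : ℤ) N, g m * (f (m + 1) + f (m - 1) - 2 * f m) := by
  induction N with
  | zero => simp; ring
  | succ N ih =>
    push_cast
    rw [← insert_Icc_right_eq_Icc_add_one (by omega : (0 : ℤ) ≤ N + 1),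
      ← insert_Icc_right_eq_Icc_add_one (by omega : (1 : ℤ) ≤ N + 1),
      sum_insert (by simp), sum_insert (by simp), ih, add_sub_cancel_right]
    ring

/-- Elastic energy, per unit `c ^ 2`, of the `N + 1` bonds between consecutive nodes `0, …, N + 1`
of a line. -/
def bondEnergy (N : ℕ) (f : ℤ → ℝ → ℝ) (t : ℝ) : ℝ :=
  ∑ m ∈ Icc (0 : ℤ) N, (f (m + 1) t - f m t) ^ 2 / 2

/-- Energy flux, per unit `c ^ 2`, into a line through its end nodes `0` and `N + 1`. -/
def endFlux (N : ℕ) (f : ℤ → ℝ → ℝ) (t : ℝ) : ℝ :=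
  (f (N + 1) t - f N t) * deriv (f (N + 1)) t - (f 1 t - f 0 t) * deriv (f 0) t

/-- Power, per unit `c ^ 2`, that the elastic forces of a line deliver to the node `m`. -/
def elasticPower (f : ℤ → ℝ → ℝ) (t : ℝ) (m : ℤ) : ℝ :=
  deriv (f m) t * (f (m + 1) t + f (m - 1) t - 2 * f m t)

theorem bondEnergy_eq_add_sum (N : ℕ) (f : ℤ → ℝ → ℝ) (t : ℝ) :
    bondEnergy N f t
      = (f 1 t - f 0 t) ^ 2 / 2 + ∑ m ∈ Icc (1 : ℤ) N, (f (m + 1) t - f m t) ^ 2 / 2 := by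
  rw [bondEnergy, ← insert_Icc_add_one_left_eq_Icc (Int.natCast_nonneg N), sum_insert (by simp),
    zero_add]

theorem hasDerivAt_bondEnergy {N : ℕ} {f : ℤ → ℝ → ℝ} {t : ℝ}
    (hf : ∀ m ∈ Icc (0 : ℤ) (N + 1), DifferentiableAt ℝ (f m) t) :
    HasDerivAt (bondEnergy N f) (endFlux N f t - ∑ m ∈ Icc (1 : ℤ) N, elasticPower f t m) t := by
  have hbond : ∀ m ∈ Icc (0 : ℤ) N, HasDerivAt (fun s => (f (m + 1) s - f m s) ^ 2 / 2)
      ((f (m + 1) t - f m t) * (deriv (f (m + 1)) t - deriv (f m) t)) t := by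
    intro m hm
    rw [mem_Icc] at hm
    have hleft := (hf m (mem_Icc.2 (by omega))).hasDerivAt
    have hright := (hf (m + 1) (mem_Icc.2 (by omega))).hasDerivAt
    exact (((hright.fun_sub hleft).fun_pow 2).div_const 2).congr_deriv (by ring)
  refine (HasDerivAt.fun_sum hbond).congr_deriv ?_
  exact sum_Icc_mul_sub_eq_sub_sum_mul_second_difference N (f · t) (fun m => deriv (f m) t)

section LineSum

variable {α : Type*}

/-- Sum of a quantity `Φ` over the `3 N ^ 2` grid lines that are parallel to an axis and whose
other two coordinates lie in `{1, …, N}`. -/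
def lineSum (N : ℕ) (Φ : (ℤ → α) → ℝ) (u : ℤ → ℤ → ℤ → α) : ℝ :=
  ∑ n ∈ Icc (1 : ℤ) N, ∑ p ∈ Icc (1 : ℤ) N, Φ (fun m => u m n p)
    + ∑ m ∈ Icc (1 : ℤ) N, ∑ p ∈ Icc (1 : ℤ) N, Φ (fun n => u m n p)
    + ∑ m ∈ Icc (1 : ℤ) N, ∑ n ∈ Icc (1 : ℤ) N, Φ (fun p => u m n p)

theorem lineSum_add (N : ℕ) (Φ Ψ : (ℤ → α) → ℝ) (u : ℤ → ℤ → ℤ → α) :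
    lineSum N (fun f => Φ f + Ψ f) u = lineSum N Φ u + lineSum N Ψ u := by
  simp only [lineSum, sum_add_distrib]
  ring

theorem lineSum_sub (N : ℕ) (Φ Ψ : (ℤ → α) → ℝ) (u : ℤ → ℤ → ℤ → α) :
    lineSum N (fun f => Φ f - Ψ f) u = lineSum N Φ u - lineSum N Ψ u := by
  simp only [lineSum, sum_sub_distrib]
  ring

theorem lineSum_sum (N : ℕ) (φ : (ℤ → α) → ℤ → ℝ) (u : ℤ → ℤ → ℤ → α) :
    lineSum N (fun f => ∑ i ∈ Icc (1 : ℤ) N, φ f i) u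
      = ∑ m ∈ Icc (1 : ℤ) N, ∑ n ∈ Icc (1 : ℤ) N, ∑ p ∈ Icc (1 : ℤ) N,
          (φ (fun i => u i n p) m + φ (fun i => u m i p) n + φ (fun i => u m n i) p) := by
  simp only [lineSum, sum_add_distrib]
  congr 2
  · exact sum_comm_cycle
  · exact sum_congr rfl fun m _ => sum_comm

theorem Icc_one_subset_Icc_zero_add_one (N : ℕ) : Icc (1 : ℤ) N ⊆ Icc (0 : ℤ) (N + 1) :=
  Icc_subset_Icc (by omega) (by omega)

theorem hasDerivAt_lineSum {N : ℕ} {Φ : (ℤ → ℝ → ℝ) → ℝ → ℝ} {Φ' : (ℤ → ℝ → ℝ) → ℝ}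
    {u : ℤ → ℤ → ℤ → ℝ → ℝ} {t : ℝ}
    (hu : ∀ m n p : ℤ, m ∈ Icc (0 : ℤ) (N + 1) → n ∈ Icc (0 : ℤ) (N + 1) →
      p ∈ Icc (0 : ℤ) (N + 1) → DifferentiableAt ℝ (u m n p) t)
    (hΦ : ∀ f : ℤ → ℝ → ℝ, (∀ m ∈ Icc (0 : ℤ) (N + 1), DifferentiableAt ℝ (f m) t) →
      HasDerivAt (Φ f) (Φ' f) t) :
    HasDerivAt (fun s => lineSum N (fun f => Φ f s) u) (lineSum N Φ' u) t := by
  have hsub := Icc_one_subset_Icc_zero_add_one N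
  refine HasDerivAt.fun_add (HasDerivAt.fun_add ?_ ?_) ?_
  · exact .fun_sum fun n hn => .fun_sum fun p hp =>
      hΦ _ fun m hm => hu m n p hm (hsub hn) (hsub hp)
  · exact .fun_sum fun m hm => .fun_sum fun p hp =>
      hΦ _ fun n hn => hu m n p (hsub hm) hn (hsub hp)
  · exact .fun_sum fun m hm => .fun_sum fun n hn =>
      hΦ _ fun p hp => hu m n p (hsub hm) (hsub hn) hp

end LineSum

section Lattice

variable {N : ℕ} {c μ J : ℝ} {V : ℝ → ℝ} {u : ℤ → ℤ → ℤ → ℝ → ℝ} {t : ℝ}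

theorem sum_ud_mul_dLap (N : ℕ) (u : ℤ → ℤ → ℤ → ℝ → ℝ) (t : ℝ) :
    ∑ m ∈ Icc (1 : ℤ) N, ∑ n ∈ Icc (1 : ℤ) N, ∑ p ∈ Icc (1 : ℤ) N, ud u m n p t * dLap u m n p t
      = lineSum N (fun f => ∑ i ∈ Icc (1 : ℤ) N, elasticPower f t i) u := by
  rw [lineSum_sum]
  refine sum_congr rfl fun m _ => sum_congr rfl fun n _ => sum_congr rfl fun p _ => ?_
  simp only [elasticPower, ud, dLap]
  ring

/-- Energy of a single node with trajectory `x`, without the coupling to its neighbours. -/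
def siteEnergy (μ J : ℝ) (V x : ℝ → ℝ) (t : ℝ) : ℝ :=
  1 / 2 * (deriv x t ^ 2 + μ * x t ^ 2) + V (x t) - J * x t

theorem hasDerivAt_siteEnergy {x : ℝ → ℝ} (hV : DifferentiableAt ℝ V (x t))
    (hx : DifferentiableAt ℝ x t) (hx' : DifferentiableAt ℝ (deriv x) t) :
    HasDerivAt (siteEnergy μ J V x)
      (deriv x t * (deriv (deriv x) t + μ * x t + deriv V (x t) - J)) t := by
  have hkinetic := hx'.hasDerivAt.fun_pow 2
  have hquadratic := (hx.hasDerivAt.fun_pow 2).const_mul μ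
  have hpotential : HasDerivAt (fun s => V (x s)) (deriv V (x t) * deriv x t) t :=
    hV.hasDerivAt.comp t hx.hasDerivAt
  refine ((((hkinetic.fun_add hquadratic).const_mul (1 / 2)).fun_add hpotential).fun_sub
    (hx.hasDerivAt.const_mul J)).congr_deriv ?_
  ring

theorem totE_eq_sum_siteEnergy_add_lineSum_bondEnergy (N : ℕ) (c μ J : ℝ) (V : ℝ → ℝ)
    (u : ℤ → ℤ → ℤ → ℝ → ℝ) (t : ℝ) :
    totE N c μ J V u t
      = ∑ m ∈ Icc (1 : ℤ) N, ∑ n ∈ Icc (1 : ℤ) N, ∑ p ∈ Icc (1 : ℤ) N, siteEnergy μ J V (u m n p) t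
        + c ^ 2 * lineSum N (fun f => bondEnergy N f t) u := by
  have hnode : ∀ m n p : ℤ, nodeH c μ J V u m n p t = siteEnergy μ J V (u m n p) t
      + c ^ 2 * ((u (m + 1) n p t - u m n p t) ^ 2 / 2 + (u m (n + 1) p t - u m n p t) ^ 2 / 2
        + (u m n (p + 1) t - u m n p t) ^ 2 / 2) := by
    intro m n p
    simp only [nodeH, siteEnergy, ud]
    ring
  have hface : lineSum N (fun f : ℤ → ℝ → ℝ => (f 1 t - f 0 t) ^ 2 / 2) u
      = ((∑ n ∈ Icc (1 : ℤ) N, ∑ p ∈ Icc (1 : ℤ) N, (u 1 n p t - u 0 n p t) ^ 2)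
        + (∑ m ∈ Icc (1 : ℤ) N, ∑ p ∈ Icc (1 : ℤ) N, (u m 1 p t - u m 0 p t) ^ 2)
        + (∑ m ∈ Icc (1 : ℤ) N, ∑ n ∈ Icc (1 : ℤ) N, (u m n 1 t - u m n 0 t) ^ 2)) / 2 := by
    simp only [lineSum, ← sum_div]
    ring
  simp only [totE, hnode, bondEnergy_eq_add_sum, lineSum_add, hface, lineSum_sum,
    sum_add_distrib, ← mul_sum]
  ring

/-- Energy flux, per unit `c ^ 2`, into the lattice through the six faces of the cube. -/
def boundaryFlux (N : ℕ) (u : ℤ → ℤ → ℤ → ℝ → ℝ) (t : ℝ) : ℝ :=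
  lineSum N (fun f => endFlux N f t) u

/-- Left-hand side of the lattice equation, that is, the external force needed at the node
`(m, n, p)` to sustain the motion `u`. It vanishes for the conservative system and equals
`β∇²u̇ - γu̇` for the damped one. -/
def latticeResidual (c μ J : ℝ) (V : ℝ → ℝ) (u : ℤ → ℤ → ℤ → ℝ → ℝ) (m n p : ℤ) (t : ℝ) : ℝ :=
  deriv (deriv (u m n p)) t - c ^ 2 * dLap u m n p t + μ * u m n p t + deriv V (u m n p t) - J

theorem boundaryFlux_eq_zero
    (hneum : ∀ m n p : ℤ, m ∈ Icc (1 : ℤ) N → n ∈ Icc (1 : ℤ) N → p ∈ Icc (1 : ℤ) N →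
      u (N + 1) n p t = u N n p t ∧ u m (N + 1) p t = u m N p t ∧ u m n (N + 1) t = u m n N t)
    (hfixed : ∀ m n p : ℤ, m ∈ Icc (0 : ℤ) (N + 1) → n ∈ Icc (0 : ℤ) (N + 1) →
      p ∈ Icc (0 : ℤ) (N + 1) → (m = 0 ∨ n = 0 ∨ p = 0) → deriv (u m n p) t = 0) :
    boundaryFlux N u t = 0 := by
  have hsub := Icc_one_subset_Icc_zero_add_one N
  have hzero : (0 : ℤ) ∈ Icc (0 : ℤ) (N + 1) := mem_Icc.2 (by omega)
  have hend : ∀ f : ℤ → ℝ → ℝ, f (N + 1) t = f N t → deriv (f 0) t = 0 → endFlux N f t = 0 := by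
    intro f hright hleft
    rw [endFlux, hright, hleft, sub_self, zero_mul, mul_zero, sub_self]
  have hx : ∀ n ∈ Icc (1 : ℤ) N, ∀ p ∈ Icc (1 : ℤ) N, endFlux N (fun m => u m n p) t = 0 :=
    fun n hn p hp => hend _ (hneum n n p hn hn hp).1
      (hfixed 0 n p hzero (hsub hn) (hsub hp) (.inl rfl))
  have hy : ∀ m ∈ Icc (1 : ℤ) N, ∀ p ∈ Icc (1 : ℤ) N, endFlux N (fun n => u m n p) t = 0 :=
    fun m hm p hp => hend _ (hneum m m p hm hm hp).2.1
      (hfixed m 0 p (hsub hm) hzero (hsub hp) (.inr (.inl rfl)))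
  have hz : ∀ m ∈ Icc (1 : ℤ) N, ∀ n ∈ Icc (1 : ℤ) N, endFlux N (fun p => u m n p) t = 0 :=
    fun m hm n hn => hend _ (hneum m n m hm hn hm).2.2
      (hfixed m n 0 (hsub hm) (hsub hn) hzero (.inr (.inr rfl)))
  rw [boundaryFlux, lineSum, sum_eq_zero fun n hn => sum_eq_zero (hx n hn),
    sum_eq_zero fun m hm => sum_eq_zero (hy m hm), sum_eq_zero fun m hm => sum_eq_zero (hz m hm),
    add_zero, add_zero]

theorem lattice_energy_conservation_general (hV : Differentiable ℝ V)
    (hu : ∀ m n p : ℤ, m ∈ Icc (0 : ℤ) (N + 1) → n ∈ Icc (0 : ℤ) (N + 1) →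
      p ∈ Icc (0 : ℤ) (N + 1) → DifferentiableAt ℝ (u m n p) t)
    (hu' : ∀ m n p : ℤ, m ∈ Icc (1 : ℤ) N → n ∈ Icc (1 : ℤ) N → p ∈ Icc (1 : ℤ) N →
      DifferentiableAt ℝ (deriv (u m n p)) t) :
    HasDerivAt (totE N c μ J V u)
      (c ^ 2 * boundaryFlux N u t + ∑ m ∈ Icc (1 : ℤ) N, ∑ n ∈ Icc (1 : ℤ) N, ∑ p ∈ Icc (1 : ℤ) N,
        ud u m n p t * latticeResidual c μ J V u m n p t) t := by
  have hsub := Icc_one_subset_Icc_zero_add_one N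
  have hforce : ∀ m n p : ℤ, deriv (u m n p) t
      * (deriv (deriv (u m n p)) t + μ * u m n p t + deriv V (u m n p t) - J)
      = ud u m n p t * latticeResidual c μ J V u m n p t
        + c ^ 2 * (ud u m n p t * dLap u m n p t) := by
    intro m n p
    rw [latticeResidual, ud]
    ring
  have hsite := HasDerivAt.fun_sum fun m (hm : m ∈ Icc (1 : ℤ) N) =>
    HasDerivAt.fun_sum fun n (hn : n ∈ Icc (1 : ℤ) N) =>
    HasDerivAt.fun_sum fun p (hp : p ∈ Icc (1 : ℤ) N) =>
      hasDerivAt_siteEnergy (μ := μ) (J := J) (hV _) (hu m n p (hsub hm) (hsub hn) (hsub hp))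
        (hu' m n p hm hn hp)
  have hbond := (hasDerivAt_lineSum hu fun _ => hasDerivAt_bondEnergy).const_mul (c ^ 2)
  rw [funext (totE_eq_sum_siteEnergy_add_lineSum_bondEnergy N c μ J V u)]
  refine (hsite.fun_add hbond).congr_deriv ?_
  simp only [hforce, sum_add_distrib, ← mul_sum, sum_ud_mul_dLap, lineSum_sub, boundaryFlux]
  ring

end Lattice

/-- The conservative lattice (`β = γ = 0`) with discrete Neumann far boundaries and
time-independent Dirichlet boundary nodes conserves the total energy. -/
theorem lattice_energy_conservation
    (N : ℕ) (hN : 1 ≤ N) (c μ J : ℝ) (hc : 0 < c)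
    (V : ℝ → ℝ) (hV : ContDiff ℝ 1 V)
    (u : ℤ → ℤ → ℤ → ℝ → ℝ)
    (hdiff : ∀ m n p : ℤ, m ∈ Icc (0:ℤ) (N + 1) → n ∈ Icc (0:ℤ) (N + 1) →
      p ∈ Icc (0:ℤ) (N + 1) → ∀ t : ℝ,
        DifferentiableAt ℝ (u m n p) t ∧ DifferentiableAt ℝ (deriv (u m n p)) t)
    (heq : ∀ m n p : ℤ, m ∈ Icc (1:ℤ) (N:ℤ) → n ∈ Icc (1:ℤ) (N:ℤ) →
      p ∈ Icc (1:ℤ) (N:ℤ) → ∀ t : ℝ,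
        deriv (deriv (u m n p)) t - c ^ 2 * dLap u m n p t + μ * u m n p t
          + deriv V (u m n p t) - J = 0)
    (hneum : ∀ m n p : ℤ, m ∈ Icc (1:ℤ) (N:ℤ) → n ∈ Icc (1:ℤ) (N:ℤ) →
      p ∈ Icc (1:ℤ) (N:ℤ) → ∀ t : ℝ,
        u ((N:ℤ) + 1) n p t = u (N:ℤ) n p t
          ∧ u m ((N:ℤ) + 1) p t = u m (N:ℤ) p t
          ∧ u m n ((N:ℤ) + 1) t = u m n (N:ℤ) t)
    (hbdry : ∀ m n p : ℤ, m ∈ Icc (0:ℤ) (N + 1) → n ∈ Icc (0:ℤ) (N + 1) →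
      p ∈ Icc (0:ℤ) (N + 1) → (m = 0 ∨ n = 0 ∨ p = 0) →
        ∀ t s : ℝ, u m n p t = u m n p s) :
    ∀ t : ℝ, HasDerivAt (totE N c μ J V u) 0 t := by
  intro t
  have hsub := Icc_one_subset_Icc_zero_add_one N
  have hflux : boundaryFlux N u t = 0 := boundaryFlux_eq_zero (hneum · · · · · · t)
    fun m n p hm hn hp h => deriv_eq_zero_of_forall_eq (hbdry m n p hm hn hp h) t
  have hpower : ∀ m ∈ Icc (1 : ℤ) N, ∀ n ∈ Icc (1 : ℤ) N, ∀ p ∈ Icc (1 : ℤ) N,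
      ud u m n p t * latticeResidual c μ J V u m n p t = 0 :=
    fun m hm n hn p hp => mul_eq_zero_of_right _ (heq m n p hm hn hp t)
  refine (lattice_energy_conservation_general (hV.differentiable one_ne_zero)
    (fun m n p hm hn hp => (hdiff m n p hm hn hp t).1)
    fun m n p hm hn hp => (hdiff m n p (hsub hm) (hsub hn) (hsub hp) t).2).congr_deriv ?_
  rw [hflux, mul_zero, zero_add]
  exact sum_eq_zero fun m hm => sum_eq_zero fun n hn => sum_eq_zero (hpower m hm n hn)

end
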